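/- Let Γ be a set of Sym(ℚ)-invariant valued relations on ℚ. Then exactly one of the following holds: (1) the crisp binary disequality relation ≠ belongs to ⟨Γ⟩ and the crisp relation Dis belongs to ⟨Γ⟩; (2) the constant-zero operation improves Γ, or some injective binary operation g : ℚ² → ℚ improves Γ. -/

import Mathlib

/-!
A `Sym(ℚ)`-invariant relation depends only on the kernel of its argument (which entries coincide),
so it takes finitely many values and everything reduces to finite families of kernels.

*The alternatives exclude each other.* Improvement passes from `Γ` to its clone
(`Clone.improves`). A constant operation does not preserve `≠`, and an injective `g` does not
preserve `Dis`: it maps `(0,0,1)`, `(0,1,1)` to a triple of distinct entries.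

*Disequality.* If the constant operation fails to improve some `R ∈ Γ`, the minimisers of `R` are
nonempty and contain no constant tuple. Take a minimiser with inclusion-maximal kernel, impose the
equalities of that kernel, and project to two positions where it differs: this is `≠`
(`clone_ne_of_not_const`).

*Dis.* All injective binary operations act alike up to a permutation of `ℚ`: the kernel of
`d = g(s,t)` is the intersection of the kernels of `s` and `t`. If `2 R(d) > R(s) + R(t)`, there
are two cases.

If `R(d)` is finite, one of `s`, `t` is strictly cheaper than `d` and has a larger kernel. Choose
a tuple `x` with minimal kernel among those cheaper than `d` with kernel above that of `d`. Using
`≠`, restrict to kernels between those of `d` and `x`, and project to a pair of positions identified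
by `x` but not by `d`. The result is a binary relation with value `R(x)` on the diagonal and
`R(d) > R(x)` off it, and `Dis` is the set of minimisers of the sum of this cost on `(x,y)` and
on `(y,z)` subject to `x ≠ z` (`clone_dis_of_cost`).

If `R(d) = ∞`, the crisp relation `Feas(R)` contains `s` and `t` but no tuple with the kernel `D` of
`d`. Choose an inclusion-minimal set `C` of pairs such that the kernels of feasible tuples between
`D` and `C` have no common pair outside `D`. By minimality there are pairs `c`, `f` such that each
of these kernels contains `c` or `f`, some omit `c` and some omit `f`. Projecting to `c` and `f`
yields a relation `T` that implies `x₀ = x₁ ∨ x₂ = x₃`, with neither disjunct redundant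
(`clone_dis_of_crisp`), and from it `Dis` is defined by an explicit primitive positive formula,
which depends on the coincidences among entries of tuples in `T` (`clone_dis_of_or`).
-/


open Classical

/-- A valued relation of arity `k` on `ℚ`. -/
abbrev VRel (k : ℕ) : Type := (Fin k → ℚ) → WithTop ℚ

/-- The crisp valued relation associated to a set of tuples: `0` on the set, `∞` off it. -/
noncomputable def crisp {k : ℕ} (S : Set (Fin k → ℚ)) : VRel k :=
  fun t => if t ∈ S then 0 else ⊤

/-- A unary operation improves a valued relation. -/
def Improves1 (f : ℚ → ℚ) {k : ℕ} (R : VRel k) : Prop :=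
  ∀ t : Fin k → ℚ, R (fun i => f (t i)) ≤ R t

/-- A binary operation improves a valued relation: `2·R(g(s,t)) ≤ R(s) + R(t)`. -/
def Improves2 (g : ℚ → ℚ → ℚ) {k : ℕ} (R : VRel k) : Prop :=
  ∀ s t : Fin k → ℚ, 2 • R (fun i => g (s i) (t i)) ≤ R s + R t

/-- A valued relation is temporal if it is invariant under all order-preserving
bijections of `ℚ`. -/
def Temporal {k : ℕ} (R : VRel k) : Prop :=
  ∀ α : ℚ → ℚ, Function.Bijective α → StrictMono α →
    ∀ t : Fin k → ℚ, R (fun i => α (t i)) = R t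

/-- A valued relation is `Sym(ℚ)`-invariant if it is invariant under all bijections of `ℚ`. -/
def SymInvariant {k : ℕ} (R : VRel k) : Prop :=
  ∀ α : ℚ → ℚ, Function.Bijective α →
    ∀ t : Fin k → ℚ, R (fun i => α (t i)) = R t

/-- The valued relational clone generated by a set `Γ` of valued relations on `ℚ`:
the smallest set of valued relations containing `Γ`, crisp equality and the crisp empty
unary relation, closed under sums of atomic expressions, projection (infimum over extra
coordinates), shifting, nonnegative scaling, `Feas` and `Opt`. -/
inductive Clone (Γ : Set ((k : ℕ) × VRel k)) : {k : ℕ} → VRel k → Prop where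
  | base {k : ℕ} {R : VRel k} : Sigma.mk k R ∈ Γ → Clone Γ R
  | eqRel : Clone Γ (crisp {t : Fin 2 → ℚ | t 0 = t 1})
  | emptyRel : Clone Γ (crisp (∅ : Set (Fin 1 → ℚ)))
  | sum {m n : ℕ} {k : Fin m → ℕ} {R : ∀ i : Fin m, VRel (k i)}
      (σ : ∀ i : Fin m, Fin (k i) → Fin n) :
      (∀ i : Fin m, Clone Γ (R i)) →
      Clone Γ (fun x : Fin n → ℚ => ∑ i : Fin m, R i (fun j => x (σ i j)))
  | proj {k n : ℕ} {R : VRel (k + n)} {R' : VRel k} :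
      Clone Γ R →
      (∀ s : Fin k → ℚ,
        IsGLB {v : WithTop ℚ | ∃ t : Fin n → ℚ, v = R (Fin.append s t)} (R' s)) →
      Clone Γ R'
  | shift {k : ℕ} {R : VRel k} (c : ℚ) :
      Clone Γ R → Clone Γ (fun t => R t + (c : WithTop ℚ))
  | scale {k : ℕ} {R : VRel k} (q : ℚ) (hq : 0 ≤ q) :
      Clone Γ R → Clone Γ (fun t => (q : WithTop ℚ) * R t)
  | feas {k : ℕ} {R : VRel k} :
      Clone Γ R → Clone Γ (fun t => if R t ≠ ⊤ then 0 else ⊤)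
  | opt {k : ℕ} {R : VRel k} :
      Clone Γ R → Clone Γ (fun t => if R t ≠ ⊤ ∧ ∀ s, R t ≤ R s then 0 else ⊤)

/-- The crisp binary order relation `<` on `ℚ`. -/
def LtS : Set (Fin 2 → ℚ) := {t | t 0 < t 1}

/-- The crisp binary disequality relation on `ℚ`. -/
def NeS : Set (Fin 2 → ℚ) := {t | t 0 ≠ t 1}

def BetwS : Set (Fin 3 → ℚ) :=
  {t | (t 0 < t 1 ∧ t 1 < t 2) ∨ (t 2 < t 1 ∧ t 1 < t 0)}

def CycS : Set (Fin 3 → ℚ) :=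
  {t | (t 0 < t 1 ∧ t 1 < t 2) ∨ (t 1 < t 2 ∧ t 2 < t 0) ∨ (t 2 < t 0 ∧ t 0 < t 1)}

/-- `c` lies strictly between `a` and `b`. -/
def StrictBetween (a b c : ℚ) : Prop := (a < c ∧ c < b) ∨ (b < c ∧ c < a)

def SepS : Set (Fin 4 → ℚ) :=
  {t | Function.Injective t ∧
    Xor' (StrictBetween (t 0) (t 1) (t 2)) (StrictBetween (t 0) (t 1) (t 3))}

def T3S : Set (Fin 3 → ℚ) :=
  {t | (t 0 = t 1 ∧ t 1 < t 2) ∨ (t 0 = t 2 ∧ t 2 < t 1)}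

def NegT3S : Set (Fin 3 → ℚ) := {t | (fun i => -(t i)) ∈ T3S}

def DisS : Set (Fin 3 → ℚ) :=
  {t | (t 0 = t 1 ∧ t 1 ≠ t 2) ∨ (t 0 ≠ t 1 ∧ t 1 = t 2)}

/-- The binary valued relation `R_{α,β,γ}` on `ℚ`. -/
noncomputable def Rabc (a b c : WithTop ℚ) : VRel 2 :=
  fun t => if t 0 = t 1 then a else if t 0 < t 1 then b else c

/-- A lex-operation on `ℚ`. -/
def IsLex (l : ℚ → ℚ → ℚ) : Prop :=
  ∀ x x' y y' : ℚ, l x y < l x' y' ↔ (x < x' ∨ (x = x' ∧ y < y'))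

/-- The dual of a binary operation on `ℚ`. -/
def dualOp (g : ℚ → ℚ → ℚ) : ℚ → ℚ → ℚ := fun x y => -g (-x) (-y)

/-- Operations of `mx` type. -/
def IsMx (g : ℚ → ℚ → ℚ) : Prop :=
  ∃ ene eeq : ℚ → ℚ, StrictMono ene ∧ StrictMono eeq ∧
    (∀ x ε : ℚ, 0 < ε → ene x < eeq x ∧ eeq x < ene (x + ε)) ∧
    ∀ x y : ℚ, g x y = if x = y then eeq x else ene (min x y)

/-- Operations of `mi` type. -/
def IsMi (g : ℚ → ℚ → ℚ) : Prop :=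
  ∃ elt eeq egt : ℚ → ℚ, StrictMono elt ∧ StrictMono eeq ∧ StrictMono egt ∧
    (∀ x ε : ℚ, 0 < ε → eeq x < egt x ∧ egt x < elt x ∧ elt x < eeq (x + ε)) ∧
    ∀ x y : ℚ, g x y = if x < y then elt x else if x = y then eeq x else egt y

/-- Operations of `lele` type. -/
def IsLele (g : ℚ → ℚ → ℚ) : Prop :=
  ∃ eneg epos : ℚ → ℚ, StrictMono eneg ∧ StrictMono epos ∧
    (∀ x, eneg x < 0) ∧ (∀ x, 0 < epos x) ∧
    ∃ l, IsLex l ∧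
      ∀ x y : ℚ, g x y = if x ≤ 0 then l (eneg x) (eneg y) else l (epos y) (epos x)

/-- A binary operation preserves a crisp relation (given as a set of tuples). -/
def Pres2 (g : ℚ → ℚ → ℚ) {k : ℕ} (S : Set (Fin k → ℚ)) : Prop :=
  ∀ s t : Fin k → ℚ, s ∈ S → t ∈ S → (fun i => g (s i) (t i)) ∈ S

/-- The feasibility relation of a valued relation. -/
def FeasSet {k : ℕ} (R : VRel k) : Set (Fin k → ℚ) := {t | R t ≠ ⊤}

/-- The set of minimal-value feasible tuples of a valued relation. -/
def OptSet {k : ℕ} (R : VRel k) : Set (Fin k → ℚ) := {t | R t ≠ ⊤ ∧ ∀ s, R t ≤ R s}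

/-- `g` preserves every relation of the crisp structure `Γ̂`, consisting of `Feas(R)`
for `R ∈ Γ` and `Opt(R_σ)` for all minors `R_σ` of relations `R ∈ Γ`. -/
def PresHat (g : ℚ → ℚ → ℚ) (Γ : Set ((k : ℕ) × VRel k)) : Prop :=
  ∀ p ∈ Γ, Pres2 g (FeasSet p.2) ∧
    ∀ (n : ℕ) (σ : Fin p.1 → Fin n),
      Pres2 g (OptSet (fun x : Fin n → ℚ => p.2 (fun j => x (σ j))))

/-- `g` is min, max, of mx/mi/lele type, or the dual of an mx/mi/lele type operation. -/
def GoodOp (g : ℚ → ℚ → ℚ) : Prop :=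
  g = (fun x y => min x y) ∨ g = (fun x y => max x y) ∨ IsMx g ∨ IsMi g ∨ IsLele g ∨
    ∃ h, (IsMx h ∨ IsMi h ∨ IsLele h) ∧ g = dualOp h

/-- `g` is the constant-zero binary operation, min, max, or of mx/mi/lele type. -/
def BaseOp (g : ℚ → ℚ → ℚ) : Prop :=
  g = (fun _ _ => (0 : ℚ)) ∨ g = (fun x y => min x y) ∨ g = (fun x y => max x y) ∨
    IsMx g ∨ IsMi g ∨ IsLele g

/-! ### Closure properties of the clone -/

section

variable {Γ : Set ((k : ℕ) × VRel k)}

lemma Clone.minor {k n : ℕ} {R : VRel k} (h : Clone Γ R) (σ : Fin k → Fin n) :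
    Clone Γ (fun x : Fin n → ℚ => R (fun j => x (σ j))) := by
  have := Clone.sum (Γ := Γ) (m := 1) (k := fun _ => k) (R := fun _ => R) (fun _ => σ)
    (fun _ => h)
  simpa using this

lemma Clone.add {n : ℕ} {R S : VRel n} (hR : Clone Γ R) (hS : Clone Γ S) :
    Clone Γ (fun x => R x + S x) := by
  have := Clone.sum (Γ := Γ) (m := 2) (k := fun _ => n)
    (R := fun i => if i = 0 then R else S) (fun _ => id)
    (fun i => by by_cases hi : i = 0 <;> simp [hi, hR, hS])
  simpa [Fin.sum_univ_two] using this

lemma clone_univ (n : ℕ) : Clone Γ (crisp (Set.univ : Set (Fin n → ℚ))) := by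
  have := Clone.sum (Γ := Γ) (m := 0) (n := n) (k := fun i => i.elim0)
    (R := fun i => i.elim0) (fun i => i.elim0) (fun i => i.elim0)
  convert this using 2
  simp [crisp]

lemma crisp_add {n : ℕ} (S T : Set (Fin n → ℚ)) (x : Fin n → ℚ) :
    crisp S x + crisp T x = crisp (S ∩ T) x := by
  by_cases h : x ∈ S <;> by_cases h' : x ∈ T <;> simp [crisp, h, h']

lemma Clone.inter {n : ℕ} {S T : Set (Fin n → ℚ)} (hS : Clone Γ (crisp S))
    (hT : Clone Γ (crisp T)) : Clone Γ (crisp (S ∩ T)) := by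
  have := hS.add hT
  simpa only [crisp_add] using this

lemma Clone.minor_crisp {k n : ℕ} {S : Set (Fin k → ℚ)} (h : Clone Γ (crisp S))
    (σ : Fin k → Fin n) : Clone Γ (crisp {x : Fin n → ℚ | (fun j => x (σ j)) ∈ S}) :=
  h.minor σ

lemma clone_iInter {ι : Type} [Finite ι] {n : ℕ} {S : ι → Set (Fin n → ℚ)}
    (h : ∀ i, Clone Γ (crisp (S i))) : Clone Γ (crisp (⋂ i, S i)) := by
  cases nonempty_fintype ι
  suffices H : ∀ F : Finset ι, Clone Γ (crisp (⋂ i ∈ F, S i)) by simpa using H Finset.univ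
  intro F
  induction F using Finset.induction_on with
  | empty => simpa using clone_univ n
  | insert a F _ ih =>
    rw [Finset.set_biInter_insert]
    exact (h a).inter ih

lemma clone_eq {n : ℕ} (i j : Fin n) : Clone Γ (crisp {x : Fin n → ℚ | x i = x j}) := by
  simpa using (Clone.eqRel (Γ := Γ)).minor_crisp ![i, j]

lemma clone_ne (hne : Clone Γ (crisp NeS)) {n : ℕ} (i j : Fin n) :
    Clone Γ (crisp {x : Fin n → ℚ | x i ≠ x j}) := by
  simpa [NeS] using hne.minor_crisp ![i, j]

/-- Projection along an arbitrary reindexing `σ : Fin k → Fin n`: the value at `y` is the infimum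
of `R x` over the tuples `x` with `x ∘ σ = y`. -/
lemma Clone.image {k n : ℕ} {R : VRel n} (h : Clone Γ R) (σ : Fin k → Fin n) {R' : VRel k}
    (hR' : ∀ y, IsGLB {v | ∃ x, (∀ i, x (σ i) = y i) ∧ v = R x} (R' y)) : Clone Γ R' := by
  have h1 := h.minor (Fin.natAdd k)
  have h2 : Clone Γ (crisp (⋂ i : Fin k,
      {x : Fin (k + n) → ℚ | x (Fin.natAdd k (σ i)) = x (Fin.castAdd n i)})) :=
    clone_iInter fun i => clone_eq _ _
  refine (h1.add h2).proj fun y => ?_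
  have key : ∀ x : Fin n → ℚ, (R (fun j => Fin.append y x (Fin.natAdd k j)) +
      crisp (⋂ i : Fin k, {x : Fin (k + n) → ℚ |
        x (Fin.natAdd k (σ i)) = x (Fin.castAdd n i)}) (Fin.append y x)) =
      if ∀ i, x (σ i) = y i then R x else ⊤ := by
    intro x
    by_cases hx : ∀ i, x (σ i) = y i <;> simp [crisp, hx]
  simp only [key]
  constructor
  · rintro v ⟨x, rfl⟩
    split_ifs with hx
    · exact (hR' y).1 ⟨x, hx, rfl⟩
    · exact le_top
  · intro v hv
    refine (hR' y).2 ?_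
    rintro w ⟨x, hx, rfl⟩
    exact hv ⟨x, by rw [if_pos hx]⟩

lemma Clone.image_crisp {k n : ℕ} {S : Set (Fin n → ℚ)} (h : Clone Γ (crisp S))
    (σ : Fin k → Fin n) :
    Clone Γ (crisp {y : Fin k → ℚ | ∃ x ∈ S, ∀ i, x (σ i) = y i}) := by
  refine h.image σ fun y => ?_
  by_cases hy : ∃ x ∈ S, ∀ i, x (σ i) = y i
  · obtain ⟨x, hxS, hx⟩ := hy
    have : crisp {y : Fin k → ℚ | ∃ x ∈ S, ∀ i, x (σ i) = y i} y = 0 :=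
      if_pos ⟨x, hxS, hx⟩
    rw [this]
    constructor
    · rintro v ⟨z, -, rfl⟩
      unfold crisp
      split_ifs <;> simp
    · intro v hv
      exact hv ⟨x, hx, by simp [crisp, hxS]⟩
  · have : crisp {y : Fin k → ℚ | ∃ x ∈ S, ∀ i, x (σ i) = y i} y = ⊤ := if_neg hy
    rw [this]
    constructor
    · rintro v ⟨z, hz, rfl⟩
      have : z ∉ S := fun hzS => hy ⟨z, hzS, hz⟩
      simp [crisp, this]
    · exact fun v _ => le_top

/-! ### Improvement and invariance pass to the clone -/

/-- Passage to infima in the improvement inequality; it covers the projection step of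
`Clone.improves` without any assumption that the infima are attained. -/
lemma two_nsmul_le_of_isGLB {A B : Set (WithTop ℚ)} {a b c : WithTop ℚ} (ha : IsGLB A a) (hb : IsGLB B b)
    (h : ∀ x ∈ A, ∀ y ∈ B, 2 • c ≤ x + y) : 2 • c ≤ a + b := by
  by_contra hlt
  rw [not_le] at hlt
  have hat : a ≠ ⊤ := by rintro rfl; simp at hlt
  have hbt : b ≠ ⊤ := by rintro rfl; simp at hlt
  lift a to ℚ using hat
  lift b to ℚ using hbt
  obtain ⟨q, hq1, hq2⟩ : ∃ q : ℚ, a + b < q ∧ (q : WithTop ℚ) ≤ 2 • c := by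
    induction c using WithTop.recTopCoe with
    | top => exact ⟨a + b + 1, by linarith, by simp [two_nsmul]⟩
    | coe c =>
      refine ⟨c + c, ?_, by simp [two_nsmul]⟩
      rw [two_nsmul] at hlt
      exact_mod_cast hlt
  have appr : ∀ {X : Set (WithTop ℚ)} {r : ℚ}, IsGLB X (r : WithTop ℚ) →
      ∃ y : ℚ, (y : WithTop ℚ) ∈ X ∧ y < r + (q - a - b) / 2 := by
    intro X r hX
    by_contra hno
    push Not at hno
    have : ((r + (q - a - b) / 2 : ℚ) : WithTop ℚ) ≤ r := by
      refine hX.2 fun y hy => ?_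
      induction y using WithTop.recTopCoe with
      | top => exact le_top
      | coe y => exact_mod_cast hno y hy
    have : r + (q - a - b) / 2 ≤ r := by exact_mod_cast this
    linarith
  obtain ⟨x, hxA, hx⟩ := appr ha
  obtain ⟨y, hyB, hy⟩ := appr hb
  have : (q : WithTop ℚ) ≤ x + y := hq2.trans (h x hxA y hyB)
  have : q ≤ x + y := by exact_mod_cast this
  linarith

lemma Clone.improves {g : ℚ → ℚ → ℚ} (hg : ∀ p ∈ Γ, Improves2 g p.2) {k : ℕ} {R : VRel k}
    (h : Clone Γ R) : Improves2 g R := by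
  induction h with
  | base h => exact hg _ h
  | eqRel =>
    intro s t
    by_cases hs : s 0 = s 1 <;> by_cases ht : t 0 = t 1 <;> simp [crisp, hs, ht]
  | emptyRel => intro s t; simp [crisp]
  | sum σ _ ih =>
    intro s t
    rw [← Finset.sum_add_distrib, Finset.smul_sum]
    exact Finset.sum_le_sum fun i _ => ih i _ _
  | @proj k n R R' _ hR' ih =>
    intro s t
    refine two_nsmul_le_of_isGLB (hR' s) (hR' t) ?_
    rintro _ ⟨x, rfl⟩ _ ⟨y, rfl⟩
    refine le_trans ?_ (ih _ _)
    refine nsmul_le_nsmul_right ((hR' _).1 ⟨fun i => g (x i) (y i), ?_⟩) 2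
    congr 1
    ext i
    refine Fin.addCases (fun i => ?_) (fun i => ?_) i <;> simp
  | shift c _ ih =>
    intro s t
    have := ih s t
    rw [two_nsmul] at this ⊢
    rw [add_add_add_comm, add_add_add_comm (_ : WithTop ℚ) (c : WithTop ℚ)]
    gcongr
  | @scale k R q hq _ ih =>
    intro s t
    have := ih s t
    rw [two_nsmul] at this ⊢
    beta_reduce
    rcases hq.eq_or_lt with rfl | hq
    · simp
    have hq0 : (q : WithTop ℚ) ≠ 0 := by exact_mod_cast hq.ne'
    generalize R (fun i => g (s i) (t i)) = c at *
    generalize R s = a at *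
    generalize R t = b at *
    induction a using WithTop.recTopCoe with
    | top => rw [WithTop.mul_top hq0]; simp
    | coe a =>
    induction b using WithTop.recTopCoe with
    | top => rw [WithTop.mul_top hq0]; simp
    | coe b =>
    induction c using WithTop.recTopCoe with
    | top => simp [← WithTop.coe_add] at this
    | coe c =>
    have h3 : c + c ≤ a + b := by exact_mod_cast this
    have h4 : q * c + q * c ≤ q * a + q * b := by nlinarith
    exact_mod_cast h4
  | @feas k R _ ih =>
    intro s t
    have := ih s t
    beta_reduce
    by_cases hs : R s = ⊤
    · simp [hs]
    by_cases ht : R t = ⊤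
    · simp [ht]
    have hg : R (fun i => g (s i) (t i)) ≠ ⊤ := by
      intro h
      rw [h, two_nsmul, top_add, top_le_iff, WithTop.add_eq_top] at this
      tauto
    simp [hg, hs, ht]
  | @opt k R _ ih =>
    intro s t
    have := ih s t
    beta_reduce
    by_cases hs : R s ≠ ⊤ ∧ ∀ z, R s ≤ R z
    swap
    · rw [if_neg hs]; simp
    by_cases ht : R t ≠ ⊤ ∧ ∀ z, R t ≤ R z
    swap
    · rw [if_neg ht]; simp
    have e : R t = R s := le_antisymm (ht.2 s) (hs.2 t)
    have hle : R (fun i => g (s i) (t i)) ≤ R s := by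
      rw [e, two_nsmul] at this
      by_contra hlt
      rw [not_le] at hlt
      have h1 := hs.1
      lift R s to ℚ using h1 with a
      generalize R (fun i => g (s i) (t i)) = c at *
      induction c using WithTop.recTopCoe with
      | top => simp [← WithTop.coe_add] at this
      | coe c =>
        have h3 : c + c ≤ a + a := by exact_mod_cast this
        have h4 : a < c := by exact_mod_cast hlt
        linarith
    rw [if_pos hs, if_pos ht, if_pos ⟨ne_top_of_le_ne_top hs.1 hle, fun z => hle.trans (hs.2 z)⟩]
    simp

lemma Clone.sym (hsym : ∀ p ∈ Γ, SymInvariant p.2) {k : ℕ} {R : VRel k}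
    (h : Clone Γ R) : SymInvariant R := by
  intro α hα
  induction h with
  | base h => exact hsym _ h α hα
  | eqRel => intro t; simp [crisp, hα.1.eq_iff]
  | emptyRel => intro t; simp [crisp]
  | sum σ _ ih => intro t; exact Finset.sum_congr rfl fun i _ => ih i (fun j => t (σ i j))
  | @proj k n R R' _ hR' ih =>
    intro s
    refine (hR' _).unique ?_
    convert hR' s using 1
    have app : ∀ x : Fin n → ℚ, Fin.append (fun i => α (s i)) (fun i => α (x i)) =
        fun i => α (Fin.append s x i) := by
      intro x
      ext i
      refine Fin.addCases (fun i => ?_) (fun i => ?_) i <;> simp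
    ext v
    constructor
    · rintro ⟨x, rfl⟩
      choose y hy using fun i => hα.2 (x i)
      refine ⟨y, ?_⟩
      rw [← ih (Fin.append s y), ← app]
      simp [hy]
    · rintro ⟨x, rfl⟩
      exact ⟨fun i => α (x i), by rw [app, ih]⟩
  | shift c _ ih => intro t; simp only [ih]
  | scale q _ _ ih => intro t; simp only [ih]
  | feas _ ih => intro t; simp only [ih]
  | opt _ ih => intro t; simp only [ih]

/-! ### Tuples up to permutation of `ℚ` -/

/-- The kernel of a tuple: the pairs of positions carrying equal entries. -/
def eqPairs {n : ℕ} (t : Fin n → ℚ) : Set (Fin n × Fin n) := {p | t p.1 = t p.2}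

lemma mem_eqPairs {n : ℕ} {t : Fin n → ℚ} {i j : Fin n} :
    (i, j) ∈ eqPairs t ↔ t i = t j := Iff.rfl

/-- Tuples with the same kernel are conjugate under `Sym(ℚ)`, by high transitivity. -/
lemma exists_perm {n : ℕ} {s t : Fin n → ℚ} (h : ∀ i j, s i = s j ↔ t i = t j) :
    ∃ α : ℚ → ℚ, Function.Bijective α ∧ ∀ i, α (s i) = t i := by
  let f : Set.range s → ℚ := fun x => t x.2.choose
  have hf : ∀ i, f ⟨s i, i, rfl⟩ = t i := fun i =>
    (h _ _).1 (Exists.choose_spec (⟨i, rfl⟩ : ∃ j, s j = s i))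
  have hfi : Function.Injective f := by
    rintro ⟨_, i, rfl⟩ ⟨_, j, rfl⟩ hij
    rw [hf, hf] at hij
    exact Subtype.ext ((h _ _).2 hij)
  have e := Finite.equivFin (Set.range s)
  obtain ⟨g, hg⟩ := (Equiv.Perm.isMultiplyPretransitive ℚ (Nat.card (Set.range s))).exists_smul_eq
    (e.symm.toEmbedding.trans (Function.Embedding.subtype _))
    (e.symm.toEmbedding.trans ⟨f, hfi⟩)
  refine ⟨g, g.bijective, fun i => ?_⟩
  have := DFunLike.congr_fun hg (e ⟨s i, i, rfl⟩)
  have h2 : g (e.symm (e ⟨s i, i, rfl⟩)) = f (e.symm (e ⟨s i, i, rfl⟩)) := this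
  rwa [Equiv.symm_apply_apply, hf] at h2

lemma SymInvariant.eq_of_eqPairs {n : ℕ} {R : VRel n} (hR : SymInvariant R) {s t : Fin n → ℚ}
    (h : eqPairs s = eqPairs t) : R s = R t := by
  obtain ⟨α, hα, hst⟩ := exists_perm (s := s) (t := t) fun i j => by
    rw [← mem_eqPairs, h, mem_eqPairs]
  rw [← hR α hα s]
  simp only [hst]

lemma SymInvariant.mem_iff {n : ℕ} {S : Set (Fin n → ℚ)} (hS : SymInvariant (crisp S))
    {α : ℚ → ℚ} (hα : Function.Bijective α) (t : Fin n → ℚ) :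
    (fun i => α (t i)) ∈ S ↔ t ∈ S := by
  have := hS α hα t
  by_cases h1 : (fun i => α (t i)) ∈ S <;> by_cases h2 : t ∈ S <;> simp_all [crisp]

lemma SymInvariant.mem_of_eqPairs {n : ℕ} {S : Set (Fin n → ℚ)} (hS : SymInvariant (crisp S))
    {s t : Fin n → ℚ} (h : ∀ i j, s i = s j ↔ t i = t j) (hs : s ∈ S) : t ∈ S := by
  obtain ⟨α, hα, hst⟩ := exists_perm h
  have := (hS.mem_iff hα s).2 hs
  simpa only [hst] using this

lemma exists_perm_pair {a b c d : ℚ} (hab : a ≠ b) (hcd : c ≠ d) :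
    ∃ α : ℚ → ℚ, Function.Bijective α ∧ α a = c ∧ α b = d := by
  obtain ⟨α, hα, h⟩ := exists_perm (s := ![a, b]) (t := ![c, d]) (by
    intro i j; fin_cases i <;> fin_cases j <;> simp [hab, hcd, hab.symm, hcd.symm])
  exact ⟨α, hα, h 0, h 1⟩

lemma finite_range_of_sym {n : ℕ} {R : VRel n} (hR : SymInvariant R) :
    (Set.range R).Finite := by
  have hf : (Set.range (eqPairs (n := n))).Finite := Set.toFinite _
  have : Function.FactorsThrough R (eqPairs (n := n)) := fun s t h => hR.eq_of_eqPairs h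
  obtain ⟨G, hG⟩ := (Function.factorsThrough_iff R).1 this
  rw [hG, Set.range_comp]
  exact hf.image G

/-- Tuples with prescribed lower and upper bounds for their kernel. -/
def box {n : ℕ} (D C : Set (Fin n × Fin n)) : Set (Fin n → ℚ) :=
  {x | D ⊆ eqPairs x ∧ eqPairs x ⊆ C}

lemma clone_eqBox {n : ℕ} (D : Set (Fin n × Fin n)) :
    Clone Γ (crisp {x | D ⊆ eqPairs x}) := by
  have := clone_iInter (Γ := Γ) (ι := D) fun p => clone_eq p.1.1 p.1.2
  convert this using 2
  ext x
  simp [Set.subset_def, eqPairs]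

lemma clone_box (hne : Clone Γ (crisp NeS)) {n : ℕ} (D C : Set (Fin n × Fin n)) :
    Clone Γ (crisp (box D C)) := by
  have h2 := clone_iInter (Γ := Γ) (ι := (Cᶜ : Set _)) fun p => clone_ne hne p.1.1 p.1.2
  convert (clone_eqBox D).inter h2 using 2
  ext x
  simp only [box, Set.subset_def, eqPairs, Set.mem_ofPred_eq, Set.mem_inter_iff, Set.mem_iInter,
    Subtype.forall, Set.mem_compl_iff]
  refine and_congr_right fun _ => ?_
  exact forall_congr' fun p => by tauto

lemma Clone.optSet {n : ℕ} {R : VRel n} (h : Clone Γ R) : Clone Γ (crisp (OptSet R)) := by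
  convert h.opt using 2
  exact if_congr Iff.rfl rfl rfl

lemma Clone.feasSet {n : ℕ} {R : VRel n} (h : Clone Γ R) : Clone Γ (crisp (FeasSet R)) := by
  convert h.feas using 2
  exact if_congr Iff.rfl rfl rfl

/-! ### Disequality -/

/-- A relation witnessing that constants do not improve `Γ` yields disequality. -/
theorem clone_ne_of_not_const (hsym : ∀ p ∈ Γ, SymInvariant p.2)
    (h : ¬ ∀ p ∈ Γ, Improves1 (fun _ => 0) p.2) : Clone Γ (crisp NeS) := by
  simp only [Improves1, not_forall, not_le] at h
  obtain ⟨⟨n, R⟩, hp, t, ht⟩ := h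
  have hR := hsym _ hp
  simp only at hR t ht
  obtain ⟨v, ⟨m, rfl⟩, hm⟩ := Set.exists_min_image (Set.range R) id (finite_range_of_sym hR)
    ⟨_, t, rfl⟩
  have hm' : ∀ x, R m ≤ R x := fun x => hm _ ⟨x, rfl⟩
  -- the minimisers of `R`: a nonempty crisp relation without constant tuples
  have hO : Clone Γ (crisp (OptSet R)) := (Clone.base hp).optSet
  have hmO : m ∈ OptSet R := ⟨((hm' t).trans_lt ht).ne_top, hm'⟩
  have hconst : ∀ x ∈ OptSet R, ∃ i j, x i ≠ x j := by
    intro x hx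
    by_contra! hc
    have : R x = R (fun _ => 0) := hR.eq_of_eqPairs (by ext p; simp [eqPairs, hc p.1 p.2])
    exact absurd (hx.2 t) (by rw [this]; exact not_le.2 ht)
  -- a minimiser with inclusion-maximal kernel
  obtain ⟨K, ⟨⟨x, hxO, rfl⟩, hmax⟩⟩ := (Set.toFinite (eqPairs '' OptSet R)).exists_maximal
    ⟨_, m, hmO, rfl⟩
  obtain ⟨i, j, hij⟩ := hconst x hxO
  have hc := (hO.inter (clone_eqBox (eqPairs x))).image_crisp ![i, j]
  convert hc using 2
  ext y
  constructor
  · intro hy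
    obtain ⟨α, hα, h1, h2⟩ := exists_perm_pair hij (show y 0 ≠ y 1 from hy)
    refine ⟨fun i => α (x i), ⟨((hO.sym hsym).mem_iff hα x).2 hxO, ?_⟩, ?_⟩
    · rintro p (hp : x p.1 = x p.2)
      exact congrArg α hp
    · intro l; fin_cases l <;> simp [h1, h2]
  · rintro ⟨z, ⟨hzO, hz⟩, hy⟩ heq
    have h0 := hy 0
    have h1 := hy 1
    simp only [Matrix.cons_val_zero, Matrix.cons_val_one] at h0 h1
    exact hij (hmax ⟨z, hzO, rfl⟩ hz (show (i, j) ∈ eqPairs z from by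
      rw [mem_eqPairs, h0, h1, heq]))

/-! ### `Dis` from a cost comparison -/

/-- If the tuple `d` is feasible and can be made cheaper by identifying entries, then the clone
contains a finite-valued binary relation that is strictly cheaper on the diagonal than off it, and
`Dis` consists of the minimisers of a sum of two copies of it. -/
theorem clone_dis_of_cost (hsym : ∀ p ∈ Γ, SymInvariant p.2) (hne : Clone Γ (crisp NeS))
    {n : ℕ} {R : VRel n} (hcl : Clone Γ R) {s d : Fin n → ℚ} (hd : R d ≠ ⊤)
    (hsub : eqPairs d ⊆ eqPairs s) (hlt : R s < R d) : Clone Γ (crisp DisS) := by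
  have hR := hcl.sym hsym
  obtain ⟨_, ⟨⟨x, ⟨hxd, hxlt⟩, rfl⟩, hmin⟩⟩ :=
    (Set.toFinite (eqPairs '' {x | eqPairs d ⊆ eqPairs x ∧ R x < R d})).exists_minimal
      ⟨_, s, ⟨hsub, hlt⟩, rfl⟩
  obtain ⟨⟨i, j⟩, hx, hdij⟩ : ∃ p ∈ eqPairs x, p ∉ eqPairs d := by
    by_contra! hcon
    exact hxlt.ne (hR.eq_of_eqPairs (Set.Subset.antisymm hcon hxd))
  rw [mem_eqPairs] at hx hdij
  -- within the box between the two kernels, every tuple other than `x` costs at least `R d`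
  have hdich : ∀ z ∈ box (eqPairs d) (eqPairs x), eqPairs z = eqPairs x ∨ R d ≤ R z := by
    intro z hz
    by_cases hzlt : R z < R d
    · exact Or.inl (Set.Subset.antisymm hz.2 (hmin ⟨z, ⟨hz.1, hzlt⟩, rfl⟩ hz.2))
    · exact Or.inr (not_lt.1 hzlt)
  have hbin : Clone Γ (fun y : Fin 2 → ℚ => if y 0 = y 1 then R x else R d) := by
    have hbox := hcl.add (clone_box hne (eqPairs d) (eqPairs x))
    have hboxsym := (clone_box (Γ := Γ) hne (eqPairs d) (eqPairs x)).sym hsym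
    refine hbox.image ![i, j] fun y => ?_
    have hval : ∀ z, z ∈ box (eqPairs d) (eqPairs x) →
        R z + crisp (box (eqPairs d) (eqPairs x)) z = R z := fun z hz => by simp [crisp, hz]
    constructor
    · rintro v ⟨z, hz, rfl⟩
      have h0 := hz 0
      have h1 := hz 1
      simp only [Matrix.cons_val_zero, Matrix.cons_val_one] at h0 h1
      by_cases hzb : z ∈ box (eqPairs d) (eqPairs x)
      swap
      · simp [crisp, hzb]
      rw [hval z hzb]
      rcases hdich z hzb with hk | hk
      · have : y 0 = y 1 := by
          rw [← h0, ← h1, ← mem_eqPairs, hk]; exact hx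
        rw [if_pos this, hR.eq_of_eqPairs hk]
      · split_ifs
        · exact hxlt.le.trans hk
        · exact hk
    · intro v hv
      split_ifs with hy
      · obtain ⟨α, hα, h1, -⟩ := exists_perm_pair (a := x i) (b := x i + 1) (c := y 0)
          (d := y 0 + 1) (by simp) (by simp)
        have hm := (hboxsym.mem_iff hα x).2 ⟨hxd, subset_rfl⟩
        have := hv ⟨fun l => α (x l), fun l => by fin_cases l <;> simp [h1, ← hx, ← hy], rfl⟩
        rwa [hval _ hm, hR α hα] at this
      · obtain ⟨α, hα, h1, h2⟩ := exists_perm_pair (a := d i) (b := d j) (c := y 0)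
          (d := y 1) hdij hy
        have hm := (hboxsym.mem_iff hα d).2 ⟨subset_rfl, hxd⟩
        have := hv ⟨fun l => α (d l), fun l => by fin_cases l <;> simp [h1, h2], rfl⟩
        rwa [hval _ hm, hR α hα] at this
  generalize R x = a at *
  generalize R d = b at *
  have hsum := (((hbin.minor ![0, 1]).add (hbin.minor ![1, 2])).add
    (clone_ne hne (0 : Fin 3) 2)).optSet
  convert hsum using 2
  have ha := hxlt.ne_top
  lift a to ℚ using ha
  lift b to ℚ using hd
  have hab : a < b := by exact_mod_cast hxlt
  set F : VRel 3 := fun t => (if t (![0, 1] 0) = t (![0, 1] 1) then (a : WithTop ℚ) else b) +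
    (if t (![1, 2] 0) = t (![1, 2] 1) then (a : WithTop ℚ) else b) +
    crisp {x : Fin 3 → ℚ | x 0 ≠ x 2} t with hF
  change DisS = OptSet F
  have hin : ∀ t ∈ DisS, F t = ((a + b : ℚ) : WithTop ℚ) := by
    rintro t (⟨h1, h2⟩ | ⟨h1, h2⟩)
    · have : t 0 ≠ t 2 := by rwa [h1]
      simp [hF, h1, h2, crisp]
    · have : t 0 ≠ t 2 := by rwa [← h2]
      simp [hF, h2, crisp, this, add_comm]
  have hout : ∀ t ∉ DisS, ((a + b : ℚ) : WithTop ℚ) < F t := by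
    intro t ht
    by_cases h02 : t 0 = t 2
    · have : F t = ⊤ := by simp [hF, crisp, h02]
      rw [this]
      exact WithTop.coe_lt_top _
    have h01 : t 0 ≠ t 1 := fun h => ht (Or.inl ⟨h, h ▸ h02⟩)
    have h12 : t 1 ≠ t 2 := fun h => ht (Or.inr ⟨h01, h⟩)
    have : F t = ((b + b : ℚ) : WithTop ℚ) := by simp [hF, crisp, h01, h12, h02]
    rw [this]
    exact_mod_cast (by linarith : a + b < b + b)
  have hw : (![0, 0, 1] : Fin 3 → ℚ) ∈ DisS := Or.inl (by simp)
  ext t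
  constructor
  · intro ht
    refine ⟨by rw [hin t ht]; exact WithTop.coe_ne_top, fun z => ?_⟩
    rw [hin t ht]
    by_cases hz : z ∈ DisS
    · rw [hin z hz]
    · exact (hout z hz).le
  · intro ht
    by_contra hc
    exact absurd (ht.2 ![0, 0, 1]) (by rw [hin _ hw]; exact not_le.2 (hout t hc))

/-! ### `Dis` from a disjunction of two equalities -/

/-- The case where `T` contains a tuple whose first disjunct holds and which has no further
coincidence. The formula shares `y` and `u` between two copies of `T`. -/
lemma clone_dis_of_free (hne : Clone Γ (crisp NeS)) {T : Set (Fin 4 → ℚ)} (hT : Clone Γ (crisp T))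
    (hor : ∀ y ∈ T, y 0 = y 1 ∨ y 2 = y 3)
    (h1 : ∀ a c d : ℚ, a ≠ c → a ≠ d → c ≠ d → ![a, a, c, d] ∈ T)
    (h2 : ∀ a b : ℚ, a ≠ b → ∃ c, c ≠ b ∧ ![a, b, c, c] ∈ T) : Clone Γ (crisp DisS) := by
  -- `∃ u w w', T(x,y,u,w) ∧ T(z,y,u,w') ∧ w ≠ w' ∧ x ≠ z`: as `u = w` and `u = w'` exclude each
  -- other, `x = y` or `z = y` must hold
  have hc := (((hT.minor_crisp ![(0 : Fin 6), 1, 3, 4]).inter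
    (hT.minor_crisp ![(2 : Fin 6), 1, 3, 5])).inter
    ((clone_ne hne (4 : Fin 6) 5).inter (clone_ne hne (0 : Fin 6) 2))).image_crisp
    ![(0 : Fin 6), 1, 2]
  convert hc using 2
  have vec : ∀ (v : Fin 6 → ℚ) (i j k l : Fin 6),
      (fun m => v (![i, j, k, l] m)) = ![v i, v j, v k, v l] := by
    intro v i j k l; ext m; fin_cases m <;> rfl
  have fresh : ∀ a b : ℚ, ∃ c, a ≠ c ∧ b ≠ c := fun a b => by
    obtain ⟨c, hc⟩ := Infinite.exists_notMem_finset ({a, b} : Finset ℚ)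
    simp only [Finset.mem_insert, Finset.mem_singleton, not_or] at hc
    exact ⟨c, Ne.symm hc.1, Ne.symm hc.2⟩
  ext y
  simp only [Set.mem_ofPred_eq, Set.mem_inter_iff, vec]
  constructor
  · rintro (⟨h01, h12⟩ | ⟨h01, h12⟩)
    · obtain ⟨u, hu, hm⟩ := h2 (y 2) (y 1) h12.symm
      obtain ⟨w, hw1, hw2⟩ := fresh (y 1) u
      refine ⟨![y 0, y 1, y 2, u, w, u], ⟨⟨?_, hm⟩, hw2.symm, ?_⟩, ?_⟩
      · change ![y 0, y 1, u, w] ∈ T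
        rw [h01]
        exact h1 _ _ _ hu.symm hw1 hw2
      · change y 0 ≠ y 2
        rwa [h01]
      · intro i; fin_cases i <;> rfl
    · obtain ⟨u, hu, hm⟩ := h2 (y 0) (y 1) h01
      obtain ⟨w, hw1, hw2⟩ := fresh (y 1) u
      refine ⟨![y 0, y 1, y 2, u, u, w], ⟨⟨hm, ?_⟩, hw2, ?_⟩, ?_⟩
      · change ![y 2, y 1, u, w] ∈ T
        rw [← h12]
        exact h1 _ _ _ hu.symm hw1 hw2
      · change y 0 ≠ y 2
        rwa [← h12]
      · intro i; fin_cases i <;> rfl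
  · rintro ⟨v, ⟨⟨hT1, hT2⟩, h45, h02⟩, hv⟩
    have e0 : v 0 = y 0 := hv 0
    have e1 : v 1 = y 1 := hv 1
    have e2 : v 2 = y 2 := hv 2
    have o1 : v 0 = v 1 ∨ v 3 = v 4 := hor _ hT1
    have o2 : v 2 = v 1 ∨ v 3 = v 5 := hor _ hT2
    rw [e0, e2] at h02
    rw [e0, e1] at o1
    rw [e2, e1] at o2
    change (y 0 = y 1 ∧ y 1 ≠ y 2) ∨ (y 0 ≠ y 1 ∧ y 1 = y 2)
    grind

/-- The case where positions `0` and `2` can be identified in both kinds of witnesses: then `Dis`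
is a minor of `T`, up to `≠`. -/
lemma clone_dis_of_tied (hne : Clone Γ (crisp NeS)) {T : Set (Fin 4 → ℚ)} (hT : Clone Γ (crisp T))
    (hor : ∀ y ∈ T, y 0 = y 1 ∨ y 2 = y 3)
    (h1 : ∀ a d : ℚ, a ≠ d → ![a, a, a, d] ∈ T)
    (h2 : ∀ a b : ℚ, a ≠ b → ![a, b, a, a] ∈ T) : Clone Γ (crisp DisS) := by
  have hc := (hT.minor_crisp ![(1 : Fin 3), 0, 1, 2]).inter (clone_ne hne (0 : Fin 3) 2)
  convert hc using 2
  have vec : ∀ v : Fin 3 → ℚ,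
      (fun m => v (![1, 0, 1, 2] m)) = ![v 1, v 0, v 1, v 2] := by
    intro v; ext m; fin_cases m <;> rfl
  ext y
  simp only [Set.mem_ofPred_eq, Set.mem_inter_iff, vec]
  constructor
  · rintro (⟨h01, h12⟩ | ⟨h01, h12⟩)
    · rw [h01]; exact ⟨h1 _ _ h12, h12⟩
    · rw [← h12]; exact ⟨h2 _ _ h01.symm, h01⟩
  · rintro ⟨hm, h02⟩
    have o : y 1 = y 0 ∨ y 1 = y 2 := hor _ hm
    change (y 0 = y 1 ∧ y 1 ≠ y 2) ∨ (y 0 ≠ y 1 ∧ y 1 = y 2)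
    grind

/-- The case distinction is on whether the witnesses `p₁`, `p₂` have a common entry in positions
`0` and `2`; a common entry in other positions is excluded by `h₁`, `h₂`. -/
lemma clone_dis_of_or_aux (hsym : ∀ p ∈ Γ, SymInvariant p.2) (hne : Clone Γ (crisp NeS))
    {T : Set (Fin 4 → ℚ)} (hT : Clone Γ (crisp T)) (hor : ∀ y ∈ T, y 0 = y 1 ∨ y 2 = y 3)
    {p₁ p₂ : Fin 4 → ℚ} (hp₁ : p₁ ∈ T) (hp₂ : p₂ ∈ T) (h23 : p₁ 2 ≠ p₁ 3) (h01 : p₂ 0 ≠ p₂ 1)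
    (h₁ : p₁ 0 ≠ p₁ 3) (h₂ : p₂ 1 ≠ p₂ 2) : Clone Γ (crisp DisS) := by
  have hTs := hT.sym hsym
  have e₁ : p₁ 0 = p₁ 1 := (hor _ hp₁).resolve_right h23
  have e₂ : p₂ 2 = p₂ 3 := (hor _ hp₂).resolve_left h01
  by_cases c₁ : p₁ 0 = p₁ 2
  · by_cases c₂ : p₂ 0 = p₂ 2
    · refine clone_dis_of_tied hne hT hor (fun a d h => ?_) fun a b h => ?_
      · obtain ⟨α, hα, ha, hb⟩ := exists_perm_pair h₁ h
        convert (hTs.mem_iff hα p₁).2 hp₁ using 1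
        ext i; fin_cases i <;> simp [← ha, ← hb, ← e₁, ← c₁]
      · obtain ⟨α, hα, ha, hb⟩ := exists_perm_pair h01 h
        convert (hTs.mem_iff hα p₂).2 hp₂ using 1
        ext i; fin_cases i <;> simp [← ha, ← hb, ← e₂, ← c₂]
    · have hT' := hT.minor_crisp ![(2 : Fin 4), 3, 0, 1]
      refine clone_dis_of_free hne hT' (fun y hy => (hor _ hy).symm) (fun a c d h h' h'' => ?_)
        fun a b h => ?_
      · refine hTs.mem_of_eqPairs (s := p₂) ?_ hp₂
        intro i j
        fin_cases i <;> fin_cases j <;> simp <;> grind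
      · obtain ⟨α, hα, ha, hb⟩ := exists_perm_pair h23 h
        refine ⟨a, h, ?_⟩
        change (fun j => ![a, b, a, a] (![(2 : Fin 4), 3, 0, 1] j)) ∈ T
        convert (hTs.mem_iff hα p₁).2 hp₁ using 1
        ext i; fin_cases i <;> simp [← ha, ← hb, ← e₁, ← c₁]
  · refine clone_dis_of_free hne hT hor (fun a c d h h' h'' => ?_) fun a b h => ?_
    · refine hTs.mem_of_eqPairs (s := p₁) ?_ hp₁
      intro i j
      fin_cases i <;> fin_cases j <;> simp <;> grind
    · obtain ⟨α, hα, ha, hb⟩ := exists_perm_pair h01 h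
      refine ⟨α (p₂ 2), by rw [← hb]; exact hα.1.ne h₂.symm, ?_⟩
      convert (hTs.mem_iff hα p₂).2 hp₂ using 1
      ext i; fin_cases i <;> simp [← ha, ← hb, ← e₂]

/-- A relation implying a disjunction of two equalities, with neither disjunct redundant, together
with `≠` yields `Dis`. -/
lemma clone_dis_of_or (hsym : ∀ p ∈ Γ, SymInvariant p.2) (hne : Clone Γ (crisp NeS))
    {T : Set (Fin 4 → ℚ)} (hT : Clone Γ (crisp T)) (hor : ∀ y ∈ T, y 0 = y 1 ∨ y 2 = y 3)
    {p₁ p₂ : Fin 4 → ℚ} (hp₁ : p₁ ∈ T) (hp₂ : p₂ ∈ T) (h23 : p₁ 2 ≠ p₁ 3) (h01 : p₂ 0 ≠ p₂ 1) :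
    Clone Γ (crisp DisS) := by
  -- exchanging positions `2, 3` and positions `0, 1` ensures the two further disequalities
  wlog h₁ : p₁ 0 ≠ p₁ 3 generalizing T p₁ p₂
  · have vec : ∀ p : Fin 4 → ℚ, (fun m => ![p 0, p 1, p 3, p 2] (![(0 : Fin 4), 1, 3, 2] m)) = p := by
      intro p; ext m; fin_cases m <;> rfl
    refine this (hT.minor_crisp ![(0 : Fin 4), 1, 3, 2]) (fun y hy => ?_)
      (p₁ := ![p₁ 0, p₁ 1, p₁ 3, p₁ 2]) (p₂ := ![p₂ 0, p₂ 1, p₂ 3, p₂ 2]) ?_ ?_ h23.symm h01 ?_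
    · exact (hor _ hy).imp_right Eq.symm
    · change (fun m => _) ∈ T; rwa [vec]
    · change (fun m => _) ∈ T; rwa [vec]
    · intro h
      exact h23 (h.symm.trans (not_not.1 h₁))
  wlog h₂ : p₂ 1 ≠ p₂ 2 generalizing T p₁ p₂
  · have vec : ∀ p : Fin 4 → ℚ, (fun m => ![p 1, p 0, p 2, p 3] (![(1 : Fin 4), 0, 2, 3] m)) = p := by
      intro p; ext m; fin_cases m <;> rfl
    refine this (hT.minor_crisp ![(1 : Fin 4), 0, 2, 3]) (fun y hy => ?_)
      (p₁ := ![p₁ 1, p₁ 0, p₁ 2, p₁ 3]) (p₂ := ![p₂ 1, p₂ 0, p₂ 2, p₂ 3]) ?_ ?_ h23 h01.symm ?_ ?_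
    · exact (hor _ hy).imp_left Eq.symm
    · change (fun m => _) ∈ T; rwa [vec]
    · change (fun m => _) ∈ T; rwa [vec]
    · have e₁ : p₁ 0 = p₁ 1 := (hor _ hp₁).resolve_right h23
      change p₁ 1 ≠ p₁ 3
      rwa [← e₁]
    · intro h
      exact h01 (h.trans (not_not.1 h₂).symm)
  exact clone_dis_of_or_aux hsym hne hT hor hp₁ hp₂ h23 h01 h₁ h₂

/-! ### `Dis` from a crisp relation whose kernels are not closed under intersection -/

/-- A crisp relation that contains `s` and `t` but no tuple whose kernel is the intersection of
the kernels of `s` and `t` yields `Dis`. -/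
theorem clone_dis_of_crisp (hsym : ∀ p ∈ Γ, SymInvariant p.2) (hne : Clone Γ (crisp NeS))
    {n : ℕ} {S : Set (Fin n → ℚ)} (hS : Clone Γ (crisp S)) {s t d : Fin n → ℚ} (hs : s ∈ S)
    (ht : t ∈ S) (hd : d ∉ S) (hdst : eqPairs d = eqPairs s ∩ eqPairs t) :
    Clone Γ (crisp DisS) := by
  set D := eqPairs d with hD
  have hSs := hS.sym hsym
  have hDne : ∀ x ∈ S, eqPairs x ≠ D := by
    intro x hx h
    refine hd (hSs.mem_of_eqPairs (fun i j => ?_) hx)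
    rw [← mem_eqPairs, h, hD, mem_eqPairs]
  -- an inclusion-minimal set `C` such that the kernels of `S` between `D` and `C` have no common
  -- pair outside `D`
  let P : Set (Fin n × Fin n) → Prop := fun C => ∀ c ∉ D, ∃ x ∈ S, x ∈ box D C ∧ c ∉ eqPairs x
  have hPuniv : P Set.univ := by
    intro c hc
    rw [hdst, Set.mem_inter_iff, not_and_or] at hc
    rcases hc with hc | hc
    · exact ⟨s, hs, ⟨hdst ▸ Set.inter_subset_left, Set.subset_univ _⟩, hc⟩
    · exact ⟨t, ht, ⟨hdst ▸ Set.inter_subset_right, Set.subset_univ _⟩, hc⟩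
  obtain ⟨C, hPC, hmin⟩ := (Set.toFinite {C | P C}).exists_minimal ⟨_, hPuniv⟩
  obtain ⟨c₀, hc₀⟩ : ∃ c, c ∉ D := by
    by_contra! hcon
    exact hDne s hs (Set.Subset.antisymm (fun p _ => hcon p)
      (hdst ▸ Set.inter_subset_left))
  obtain ⟨x₀, hx₀S, hx₀, -⟩ := hPC c₀ hc₀
  obtain ⟨c, hcx, hcD⟩ : ∃ c ∈ eqPairs x₀, c ∉ D := by
    by_contra! hcon
    exact hDne x₀ hx₀S (Set.Subset.antisymm hcon hx₀.1)
  have hcC : c ∈ C := hx₀.2 hcx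
  have hnP : ¬ P (C \ {c}) := fun h => (hmin h Set.sdiff_subset hcC).2 rfl
  obtain ⟨f, hfD, hf⟩ : ∃ f ∉ D, ∀ x ∈ S, x ∈ box D (C \ {c}) → f ∈ eqPairs x := by
    simpa [P] using hnP
  obtain ⟨x₁, hx₁S, hx₁, hx₁f⟩ := hPC f hfD
  obtain ⟨x₂, hx₂S, hx₂, hx₂c⟩ := hPC c hcD
  have hT := (hS.inter (clone_box hne D C)).image_crisp ![c.1, c.2, f.1, f.2]
  refine clone_dis_of_or hsym hne hT (p₁ := fun i => x₁ (![c.1, c.2, f.1, f.2] i))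
    (p₂ := fun i => x₂ (![c.1, c.2, f.1, f.2] i)) ?_ ⟨x₁, ⟨hx₁S, hx₁⟩, fun _ => rfl⟩
    ⟨x₂, ⟨hx₂S, hx₂⟩, fun _ => rfl⟩ hx₁f hx₂c
  rintro y ⟨z, ⟨hzS, hz⟩, hy⟩
  rw [← hy 0, ← hy 1, ← hy 2, ← hy 3]
  by_cases hzc : c ∈ eqPairs z
  · exact Or.inl hzc
  · exact Or.inr (hf z hzS ⟨hz.1, fun p hp => ⟨hz.2 hp, fun hpc => hzc (hpc ▸ hp)⟩⟩)

theorem clone_dis_of_not_injective (hsym : ∀ p ∈ Γ, SymInvariant p.2)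
    (hne : Clone Γ (crisp NeS)) {g : ℚ → ℚ → ℚ}
    (hg : Function.Injective (fun p : ℚ × ℚ => g p.1 p.2)) (h : ¬ ∀ p ∈ Γ, Improves2 g p.2) :
    Clone Γ (crisp DisS) := by
  simp only [Improves2, not_forall, not_le] at h
  obtain ⟨⟨n, R⟩, hp, s, t, hlt⟩ := h
  simp only at R s t hlt
  have hcl : Clone Γ R := Clone.base hp
  set d : Fin n → ℚ := fun i => g (s i) (t i) with hd
  have hdst : eqPairs d = eqPairs s ∩ eqPairs t := by
    ext ⟨i, j⟩
    have := hg.eq_iff (a := (s i, t i)) (b := (s j, t j))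
    simpa [eqPairs, hd] using this
  have hst : R s + R t ≠ ⊤ := hlt.ne_top
  rw [Ne, WithTop.add_eq_top, not_or] at hst
  by_cases hdt : R d = ⊤
  · exact clone_dis_of_crisp hsym hne hcl.feasSet hst.1 hst.2 (fun h => h hdt) hdst
  · rcases lt_or_ge (R s) (R d) with h1 | h1
    · exact clone_dis_of_cost hsym hne hcl hdt (hdst ▸ Set.inter_subset_left) h1
    rcases lt_or_ge (R t) (R d) with h2 | h2
    · exact clone_dis_of_cost hsym hne hcl hdt (hdst ▸ Set.inter_subset_right) h2
    rw [two_nsmul] at hlt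
    exact absurd (add_le_add h1 h2) (not_le.2 hlt)

/-! ### The dichotomy -/

lemma not_improves_ne {Γ : Set ((k : ℕ) × VRel k)} (h : ∀ p ∈ Γ, Improves1 (fun _ => 0) p.2) :
    ¬ Clone Γ (crisp NeS) := by
  intro hc
  have := hc.improves (g := fun _ _ => 0) (fun p hp s t => by
    rw [two_nsmul]; exact add_le_add (h p hp s) (h p hp t)) ![0, 1] ![0, 1]
  simp [crisp, NeS, two_nsmul] at this

lemma not_improves_dis {Γ : Set ((k : ℕ) × VRel k)} {g : ℚ → ℚ → ℚ}
    (hg : Function.Injective (fun p : ℚ × ℚ => g p.1 p.2)) (h : ∀ p ∈ Γ, Improves2 g p.2) :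
    ¬ Clone Γ (crisp DisS) := by
  intro hc
  have h1 : g 0 0 ≠ g 0 1 := fun e => by simpa using hg (a₁ := (0, 0)) (a₂ := (0, 1)) e
  have h2 : g 0 1 ≠ g 1 1 := fun e => by simpa using hg (a₁ := (0, 1)) (a₂ := (1, 1)) e
  have := hc.improves h ![0, 0, 1] ![0, 1, 1]
  simp [crisp, DisS, two_nsmul, h1, h2] at this

end

/-- Dichotomy for equality valued constraint languages: exactly one of
(1) `⟨Γ⟩` contains crisp `≠` and crisp `Dis`;
(2) the constant-zero operation improves `Γ`, or some injective binary operation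
improves `Γ`. -/
theorem stmt5 (Γ : Set ((k : ℕ) × VRel k)) (hsym : ∀ p ∈ Γ, SymInvariant p.2) :
    Xor' (Clone Γ (crisp NeS) ∧ Clone Γ (crisp DisS))
      ((∀ p ∈ Γ, Improves1 (fun _ => 0) p.2) ∨
        ∃ g : ℚ → ℚ → ℚ, Function.Injective (fun p : ℚ × ℚ => g p.1 p.2) ∧
          ∀ p ∈ Γ, Improves2 g p.2) := by
  obtain ⟨e⟩ : Nonempty (ℚ × ℚ ≃ ℚ) := nonempty_equiv_of_countable
  by_cases h0 : ∀ p ∈ Γ, Improves1 (fun _ => 0) p.2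
  · exact Or.inr ⟨Or.inl h0, fun h => not_improves_ne h0 h.1⟩
  by_cases h2 : ∃ g : ℚ → ℚ → ℚ, Function.Injective (fun p : ℚ × ℚ => g p.1 p.2) ∧
      ∀ p ∈ Γ, Improves2 g p.2
  · obtain ⟨g, hg, himp⟩ := h2
    exact Or.inr ⟨Or.inr ⟨g, hg, himp⟩, fun h => not_improves_dis hg himp h.2⟩
  · have hne := clone_ne_of_not_const hsym h0
    refine Or.inl ⟨⟨hne, ?_⟩, fun h => h.elim h0 h2⟩
    exact clone_dis_of_not_injective hsym hne (g := fun x y => e (x, y)) e.injective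
      fun h => h2 ⟨_, e.injective, h⟩
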